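/- Let G = (V,E) be a finite graph with strictly positive edge weights x, cluster weight q ≥ 1, and E' ⊆ E; for s > 0 let P^s be the random-cluster measure with weights s on E' and x off E'. Then for every nonempty increasing event A ⊆ {0,1}^E, the function s ↦ log P^s(A) is differentiable on (0, ∞) and for every s > 0: (d/ds) log P^s(A) ≥ (1/(s(1+s))) Σ_{e ∈ E'} P^s(e ∈ Piv_A | A). -/

import Mathlib

noncomputable section
open scoped Classical BigOperators

namespace RandomCluster

variable {V : Type*} [Fintype V] [DecidableEq V]

/-- A percolation configuration on the edge set `E`. -/
def Config (E : Finset (Sym2 V)) : Type _ := {e : Sym2 V // e ∈ E} → Bool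

instance (E : Finset (Sym2 V)) : Fintype (Config E) := by unfold Config; infer_instance

/-- The set of open edges of a configuration. -/
def openEdges {E : Finset (Sym2 V)} (ω : Config E) : Set (Sym2 V) :=
  {e | ∃ h : e ∈ E, ω ⟨e, h⟩ = true}

/-- `κ(ω)`: the number of connected components of the spanning subgraph of open edges
(isolated vertices included). -/
def kappa {E : Finset (Sym2 V)} (ω : Config E) : ℕ :=
  Nat.card (SimpleGraph.fromEdgeSet (openEdges ω)).ConnectedComponent

/-- The (unnormalized) random-cluster weight. -/
def weight (E : Finset (Sym2 V)) (x : Sym2 V → ℝ) (q : ℝ) (ω : Config E) : ℝ :=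
  q ^ kappa ω * ∏ e : {e : Sym2 V // e ∈ E}, (if ω e then x e.1 else 1)

/-- The partition function. -/
def Z (E : Finset (Sym2 V)) (x : Sym2 V → ℝ) (q : ℝ) : ℝ :=
  ∑ ω : Config E, weight E x q ω

/-- The random-cluster probability measure. -/
def prob (E : Finset (Sym2 V)) (x : Sym2 V → ℝ) (q : ℝ) (ω : Config E) : ℝ :=
  weight E x q ω / Z E x q

/-- The random-cluster measure conditioned on `{ω : ω e = i}`. -/
def condProb (E : Finset (Sym2 V)) (x : Sym2 V → ℝ) (q : ℝ) (e : {e : Sym2 V // e ∈ E})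
    (i : Bool) (ω : Config E) : ℝ :=
  if ω e = i then prob E x q ω / (∑ η : Config E, if η e = i then prob E x q η else 0) else 0

end RandomCluster


namespace RandomCluster

variable {V : Type*} [Fintype V] [DecidableEq V]

/-- The weights modified to equal `s` on every edge of `E'`. -/
def modWeights (E' : Finset (Sym2 V)) (x : Sym2 V → ℝ) (s : ℝ) : Sym2 V → ℝ :=
  fun e => if e ∈ E' then s else x e

/-- An event is increasing if it is stable under opening more edges. -/
def Increasing {E : Finset (Sym2 V)} (A : Set (Config E)) : Prop :=
  ∀ ω ω' : Config E, (∀ f, ω f ≤ ω' f) → ω ∈ A → ω' ∈ A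

/-- The edge `e` is pivotal for `A` in `ω`: exactly one of the two configurations agreeing
with `ω` off `e` lies in `A`. -/
def Pivotal {E : Finset (Sym2 V)} (A : Set (Config E)) (e : {e : Sym2 V // e ∈ E})
    (ω : Config E) : Prop :=
  Xor' (Function.update ω e true ∈ A) (Function.update ω e false ∈ A)

/-- `P^s(A)` for the measure with weights `s` on `E'` and `x` elsewhere. -/
def probOf (E E' : Finset (Sym2 V)) (x : Sym2 V → ℝ) (q s : ℝ) (A : Set (Config E)) : ℝ :=
  ∑ ω : Config E, (if ω ∈ A then prob E (modWeights E' x s) q ω else 0)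

/-- `P^s(e ∈ Piv_A | A)`. -/
def condPiv (E E' : Finset (Sym2 V)) (x : Sym2 V → ℝ) (q s : ℝ) (A : Set (Config E))
    (e : {e : Sym2 V // e ∈ E}) : ℝ :=
  (∑ ω : Config E, (if ω ∈ A ∧ Pivotal A e ω then prob E (modWeights E' x s) q ω else 0)) /
    probOf E E' x q s A

end RandomCluster


/-!
Since `P^s(ω) ∝ s ^ o(ω)` times a factor free of `s`, where `o(ω)` counts the open edges of `E'`,
the logarithmic derivative of the total weight of an event `A` is `s⁻¹` times the conditional
expectation of `o` given `A`. Applied to `A` and to the whole space this gives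
`d/ds log P^s(A) = s⁻¹ ∑_{e ∈ E'} (P^s(e open ∣ A) - P^s(e open))`.

For one edge `e`, let `B ⊆ A` be the event that `A` still holds once `e` is closed. Since `A` is
increasing, `A \ B` is the event that `A` holds and `e` is pivotal, and `e` is open on it. Hence
`P(A, e open) - P(A) P(e open) = [P(B, e open) - P(B) P(e open)] + P(A \ B) P(e closed)`,
where the bracket is nonnegative by the FKG inequality. The latter rests on supermodularity of the
number `κ` of components, which is the dimension of the space of functions constant along edges.
Finally, closing an open edge of weight `s` does not decrease `κ`, so `P(e closed) ≥ 1 / (1 + s)`.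
-/

/-! ### Supermodularity of the number of components -/

namespace RandomCluster

theorem card_connectedComponent_add_le {V : Type*} [Finite V] (G H : SimpleGraph V) :
    Nat.card G.ConnectedComponent + Nat.card H.ConnectedComponent ≤
      Nat.card (G ⊓ H).ConnectedComponent + Nat.card (G ⊔ H).ConnectedComponent := by
  have := Fintype.ofFinite V
  -- The kernel of the Laplacian consists of the functions that are constant along edges.
  let K (G : SimpleGraph V) : Submodule ℝ (V → ℝ) := (Matrix.toLin' (G.lapMatrix ℝ)).ker
  have mem_K {G : SimpleGraph V} {f : V → ℝ} : f ∈ K G ↔ ∀ i j, G.Adj i j → f i = f j := by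
    rw [LinearMap.mem_ker, Matrix.toLin'_apply, SimpleGraph.lapMatrix_mulVec_eq_zero_iff_forall_adj]
  have sup_le_K : K G ⊔ K H ≤ K (G ⊓ H) :=
    sup_le (fun f hf ↦ mem_K.2 fun i j h ↦ mem_K.1 hf i j h.1)
      (fun f hf ↦ mem_K.2 fun i j h ↦ mem_K.1 hf i j h.2)
  have inf_le_K : K G ⊓ K H ≤ K (G ⊔ H) := fun f hf ↦
    mem_K.2 fun i j h ↦ h.elim (mem_K.1 hf.1 i j) (mem_K.1 hf.2 i j)
  have card_eq (G : SimpleGraph V) : Nat.card G.ConnectedComponent = Module.finrank ℝ (K G) := by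
    rw [Nat.card_eq_fintype_card,
      SimpleGraph.card_connectedComponent_eq_finrank_ker_toLin'_lapMatrix]
  simp only [card_eq]
  calc Module.finrank ℝ (K G) + Module.finrank ℝ (K H)
      = Module.finrank ℝ ↥(K G ⊔ K H) + Module.finrank ℝ ↥(K G ⊓ K H) :=
        (Submodule.finrank_sup_add_finrank_inf_eq _ _).symm
    _ ≤ Module.finrank ℝ (K (G ⊓ H)) + Module.finrank ℝ (K (G ⊔ H)) :=
        add_le_add (Submodule.finrank_mono sup_le_K) (Submodule.finrank_mono inf_le_K)

section Config

variable {V : Type*} {E : Finset (Sym2 V)}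

instance : DistribLattice (Config E) :=
  inferInstanceAs (DistribLattice ({e : Sym2 V // e ∈ E} → Bool))

instance : Nonempty (Config E) := ⟨fun _ ↦ false⟩

theorem inf_apply (ω η : Config E) (e : {e : Sym2 V // e ∈ E}) : (ω ⊓ η) e = (ω e && η e) := rfl

theorem sup_apply (ω η : Config E) (e : {e : Sym2 V // e ∈ E}) : (ω ⊔ η) e = (ω e || η e) := rfl

theorem openEdges_inf (ω η : Config E) : openEdges (ω ⊓ η) = openEdges ω ∩ openEdges η := by
  ext e
  by_cases he : e ∈ E <;> simp [openEdges, inf_apply, he]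

theorem openEdges_sup (ω η : Config E) : openEdges (ω ⊔ η) = openEdges ω ∪ openEdges η := by
  ext e
  by_cases he : e ∈ E <;> simp [openEdges, sup_apply, he]

theorem openEdges_mono {ω η : Config E} (h : ω ≤ η) : openEdges ω ⊆ openEdges η := by
  rw [← inf_eq_left.2 h, openEdges_inf]
  exact Set.inter_subset_right

theorem kappa_anti [Finite V] {ω η : Config E} (h : ω ≤ η) : kappa η ≤ kappa ω :=
  SimpleGraph.ConnectedComponent.card_le_card_of_le
    (SimpleGraph.fromEdgeSet_mono (openEdges_mono h))

theorem kappa_add_le [Finite V] (ω η : Config E) :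
    kappa ω + kappa η ≤ kappa (ω ⊓ η) + kappa (ω ⊔ η) := by
  unfold kappa
  rw [openEdges_inf, openEdges_sup, SimpleGraph.fromEdgeSet_inter, SimpleGraph.fromEdgeSet_union]
  exact card_connectedComponent_add_le _ _

section SetEdge

variable [DecidableEq V]

/-- The configuration that agrees with `ω` off the edge `e` and in which `e` has state `b`. This is
`Function.update`, retyped since `Config E` does not unfold to a function type by itself. -/
def setEdge (ω : Config E) (e : {e : Sym2 V // e ∈ E}) (b : Bool) : Config E :=
  Function.update ω e b

theorem setEdge_apply_self (ω : Config E) (e : {e : Sym2 V // e ∈ E}) (b : Bool) :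
    setEdge ω e b e = b :=
  Function.update_self ..

theorem setEdge_apply_of_ne (ω : Config E) {e f : {e : Sym2 V // e ∈ E}} (hf : f ≠ e) (b : Bool) :
    setEdge ω e b f = ω f :=
  Function.update_of_ne hf ..

theorem setEdge_eq_self {ω : Config E} {e : {e : Sym2 V // e ∈ E}} {b : Bool} (h : ω e = b) :
    setEdge ω e b = ω :=
  Function.update_eq_self_iff.2 h.symm

theorem setEdge_setEdge_eq_self {ω : Config E} {e : {e : Sym2 V // e ∈ E}} {b : Bool}
    (h : ω e = b) (c : Bool) : setEdge (setEdge ω e c) e b = ω :=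
  (Function.update_idem ..).trans (setEdge_eq_self h)

theorem setEdge_false_le (ω : Config E) (e : {e : Sym2 V // e ∈ E}) : setEdge ω e false ≤ ω :=
  update_le_self_iff.2 (Bool.false_le _)

theorem le_setEdge_true (ω : Config E) (e : {e : Sym2 V // e ∈ E}) : ω ≤ setEdge ω e true :=
  le_update_self_iff.2 (Bool.le_true _)

theorem setEdge_mono {ω η : Config E} (h : ω ≤ η) (e : {e : Sym2 V // e ∈ E}) (b : Bool) :
    setEdge ω e b ≤ setEdge η e b :=
  update_le_update_iff.2 ⟨le_rfl, fun f _ ↦ h f⟩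

end SetEdge

theorem increasing_iff_isUpperSet {A : Set (Config E)} : Increasing A ↔ IsUpperSet A := Iff.rfl

end Config

/-! ### Weights of configurations -/

section Weight

variable {V : Type*} {E : Finset (Sym2 V)} {y : Sym2 V → ℝ} {q : ℝ}

theorem weight_pos (hy : ∀ e ∈ E, 0 < y e) (hq : 0 < q) (ω : Config E) : 0 < weight E y q ω :=
  mul_pos (pow_pos hq _) (Finset.prod_pos fun e _ ↦ by split_ifs <;> simp [hy e e.2])

theorem prod_open_nonneg (hy : ∀ e ∈ E, 0 ≤ y e) (ω : Config E) :
    0 ≤ ∏ e : {e : Sym2 V // e ∈ E}, if ω e then y e else 1 :=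
  Finset.prod_nonneg fun e _ ↦ by split_ifs <;> simp [hy e e.2]

theorem prod_open_mul_prod_open (ω η : Config E) :
    (∏ e : {e : Sym2 V // e ∈ E}, if ω e then y e else 1) *
        (∏ e : {e : Sym2 V // e ∈ E}, if η e then y e else 1) =
      (∏ e : {e : Sym2 V // e ∈ E}, if (ω ⊓ η) e then y e else 1) *
        ∏ e : {e : Sym2 V // e ∈ E}, if (ω ⊔ η) e then y e else 1 := by
  simp only [← Finset.prod_mul_distrib, inf_apply, sup_apply]
  refine Finset.prod_congr rfl fun e _ ↦ ?_
  by_cases hω : ω e = true <;> by_cases hη : η e = true <;> simp [hω, hη]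

theorem weight_mul_weight_le [Finite V] (hy : ∀ e ∈ E, 0 ≤ y e) (hq : 1 ≤ q) (ω η : Config E) :
    weight E y q ω * weight E y q η ≤ weight E y q (ω ⊓ η) * weight E y q (ω ⊔ η) := by
  unfold weight
  rw [mul_mul_mul_comm, mul_mul_mul_comm (q ^ kappa (ω ⊓ η)), ← pow_add, ← pow_add,
    prod_open_mul_prod_open]
  exact mul_le_mul_of_nonneg_right (pow_le_pow_right₀ hq (kappa_add_le ω η))
    (mul_nonneg (prod_open_nonneg hy _) (prod_open_nonneg hy _))

theorem prod_open_eq_mul [DecidableEq V] {ω : Config E} {e : {e : Sym2 V // e ∈ E}}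
    (he : ω e = true) :
    (∏ f : {e : Sym2 V // e ∈ E}, if ω f then y f else 1) =
      y e * ∏ f : {e : Sym2 V // e ∈ E}, if setEdge ω e false f then y f else 1 := by
  rw [← Fintype.prod_ite_eq e (fun f : {e : Sym2 V // e ∈ E} ↦ y f), ← Finset.prod_mul_distrib]
  refine Finset.prod_congr rfl fun f _ ↦ ?_
  rcases eq_or_ne e f with rfl | hf
  · simp [he, setEdge_apply_self]
  · simp [hf, setEdge_apply_of_ne _ hf.symm]

theorem weight_le_mul_weight_setEdge_false [Finite V] [DecidableEq V] (hy : ∀ e ∈ E, 0 ≤ y e)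
    (hq : 1 ≤ q) {ω : Config E} {e : {e : Sym2 V // e ∈ E}} (he : ω e = true) :
    weight E y q ω ≤ y e * weight E y q (setEdge ω e false) := by
  unfold weight
  rw [mul_left_comm, prod_open_eq_mul he]
  exact mul_le_mul_of_nonneg_right (pow_le_pow_right₀ hq (kappa_anti (setEdge_false_le ω e)))
    (mul_nonneg (hy e e.2) (prod_open_nonneg hy _))

end Weight

/-! ### Total and conditional mass of an event -/

section Mass

variable {α : Type*} [Fintype α] {w : α → ℝ}

/-- The total mass of the event `A` under the unnormalized weights `w`. -/
def mass (w : α → ℝ) (A : Set α) : ℝ := ∑ ω with ω ∈ A, w ω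

/-- The conditional probability of `B` given `A` under the probability measure proportional to `w`;
it is `0` if `A` has mass `0`. The unconditional probability of `B` is obtained for
`A = Set.univ`. -/
def condMass (w : α → ℝ) (B A : Set α) : ℝ := mass w (A ∩ B) / mass w A

theorem mass_eq_sum_filter (w : α → ℝ) (A : Set α) [DecidablePred (· ∈ A)] :
    mass w A = ∑ ω with ω ∈ A, w ω := by
  unfold mass
  congr!

theorem mass_nonneg (hw : ∀ ω, 0 ≤ w ω) (A : Set α) : 0 ≤ mass w A :=
  Finset.sum_nonneg fun ω _ ↦ hw ω

theorem mass_pos (hw : ∀ ω, 0 < w ω) {A : Set α} (hA : A.Nonempty) : 0 < mass w A :=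
  Finset.sum_pos (fun ω _ ↦ hw ω) (hA.imp fun _ hω ↦ by simpa using hω)

theorem mass_inter_add_mass_sdiff (w : α → ℝ) (A B : Set α) :
    mass w (A ∩ B) + mass w (A \ B) = mass w A := by
  simp only [mass, Set.mem_inter_iff, Set.mem_sdiff, ← Finset.filter_filter]
  exact Finset.sum_filter_add_sum_filter_not _ _ _

theorem mass_add_mass_compl (w : α → ℝ) (A : Set α) : mass w A + mass w Aᶜ = mass w Set.univ := by
  rw [← mass_inter_add_mass_sdiff w Set.univ A, Set.univ_inter, Set.compl_eq_univ_sdiff]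

theorem mass_const_mul (c : ℝ) (w : α → ℝ) (A : Set α) :
    mass (fun ω ↦ c * w ω) A = c * mass w A :=
  (Finset.mul_sum ..).symm

theorem mass_mul_mass_le [DistribLattice α] (hw : ∀ ω, 0 ≤ w ω)
    (hw_lattice : ∀ ω η, w ω * w η ≤ w (ω ⊓ η) * w (ω ⊔ η)) {A B : Set α}
    (hA : IsUpperSet A) (hB : IsUpperSet B) :
    mass w A * mass w B ≤ mass w Set.univ * mass w (A ∩ B) := by
  have indicator_nonneg (A : Set α) : 0 ≤ A.indicator (1 : α → ℝ) :=
    Set.indicator_nonneg fun _ _ ↦ zero_le_one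
  have indicator_mono {A : Set α} (hA : IsUpperSet A) : Monotone (A.indicator (1 : α → ℝ)) :=
    fun ω η h ↦ by
      by_cases hω : ω ∈ A
      · simp [hω, hA h hω]
      · rw [Set.indicator_of_notMem hω]
        exact indicator_nonneg A η
  have := fkg _ _ w hw (indicator_nonneg A) (indicator_nonneg B) (indicator_mono hA)
    (indicator_mono hB) hw_lattice
  simpa [mass, Finset.sum_filter, Set.indicator_apply, ← ite_and, and_comm] using this

theorem hasDerivAt_mass {w : ℝ → α → ℝ} {w' : α → ℝ} {s : ℝ}
    (hw : ∀ ω, HasDerivAt (fun t ↦ w t ω) (w' ω) s) (A : Set α) :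
    HasDerivAt (fun t ↦ mass (w t) A) (mass w' A) s :=
  HasDerivAt.fun_sum fun ω _ ↦ hw ω

end Mass

/-! ### Pivotal edges and the FKG inequality -/

section Pivotal

variable {V : Type*} {E : Finset (Sym2 V)}

/-- The event that the edge `e` is open. -/
def edgeOpen (e : {e : Sym2 V // e ∈ E}) : Set (Config E) := {ω | ω e = true}

theorem mem_edgeOpen {e : {e : Sym2 V // e ∈ E}} {ω : Config E} : ω ∈ edgeOpen e ↔ ω e = true :=
  Iff.rfl

theorem isUpperSet_edgeOpen (e : {e : Sym2 V // e ∈ E}) : IsUpperSet (edgeOpen e) :=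
  fun _ _ h hω ↦ Bool.eq_true_of_true_le (hω ▸ h e)

variable [DecidableEq V]

/-- The event that `A` occurs without the help of the edge `e`, that is, that it occurs once `e` is
closed. -/
def holdsWithout (A : Set (Config E)) (e : {e : Sym2 V // e ∈ E}) : Set (Config E) :=
  {ω | setEdge ω e false ∈ A}

theorem isUpperSet_holdsWithout {A : Set (Config E)} (hA : IsUpperSet A)
    (e : {e : Sym2 V // e ∈ E}) : IsUpperSet (holdsWithout A e) :=
  fun _ _ h hω ↦ hA (setEdge_mono h e false) hω

theorem inter_holdsWithout {A : Set (Config E)} (hA : IsUpperSet A) (e : {e : Sym2 V // e ∈ E}) :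
    A ∩ holdsWithout A e = holdsWithout A e :=
  Set.inter_eq_right.2 fun ω hω ↦ hA (setEdge_false_le ω e) hω

theorem sdiff_holdsWithout {A : Set (Config E)} (hA : IsUpperSet A) (e : {e : Sym2 V // e ∈ E}) :
    A \ holdsWithout A e = A ∩ {ω | Pivotal A e ω} := by
  ext ω
  refine and_congr_right fun hω ↦ ?_
  have hω_open : setEdge ω e true ∈ A := hA (le_setEdge_true ω e) hω
  change setEdge ω e false ∉ A ↔ Xor (setEdge ω e true ∈ A) (setEdge ω e false ∈ A)
  simp [hω_open]

theorem sdiff_holdsWithout_subset_edgeOpen (A : Set (Config E)) (e : {e : Sym2 V // e ∈ E}) :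
    A \ holdsWithout A e ⊆ edgeOpen e := by
  rintro ω ⟨hω, hω'⟩
  by_contra he
  have : setEdge ω e false = ω := setEdge_eq_self (Bool.eq_false_of_not_eq_true he)
  exact hω' (this.symm ▸ hω : setEdge ω e false ∈ A)

theorem mass_pivotal_mul_mass_closed_le {w : Config E → ℝ} (hw : ∀ ω, 0 ≤ w ω)
    (hw_lattice : ∀ ω η, w ω * w η ≤ w (ω ⊓ η) * w (ω ⊔ η)) {A : Set (Config E)}
    (hA : IsUpperSet A) (e : {e : Sym2 V // e ∈ E}) :
    mass w (A ∩ {ω | Pivotal A e ω}) * mass w (edgeOpen e)ᶜ ≤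
      mass w Set.univ * mass w (A ∩ edgeOpen e) - mass w A * mass w (edgeOpen e) := by
  set B := holdsWithout A e
  have hA_split : mass w B + mass w (A ∩ {ω | Pivotal A e ω}) = mass w A := by
    rw [← mass_inter_add_mass_sdiff w A B, inter_holdsWithout hA, sdiff_holdsWithout hA]
  have hA_open_split : mass w (B ∩ edgeOpen e) + mass w (A ∩ {ω | Pivotal A e ω}) =
      mass w (A ∩ edgeOpen e) := by
    rw [← mass_inter_add_mass_sdiff w (A ∩ edgeOpen e) B, Set.inter_right_comm,
      inter_holdsWithout hA, Set.inter_sdiff_right_comm,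
      Set.inter_eq_left.2 (sdiff_holdsWithout_subset_edgeOpen A e), sdiff_holdsWithout hA]
  have huniv_split : mass w (edgeOpen e) + mass w (edgeOpen e)ᶜ = mass w Set.univ :=
    mass_add_mass_compl w _
  have hfkg : mass w B * mass w (edgeOpen e) ≤ mass w Set.univ * mass w (B ∩ edgeOpen e) :=
    mass_mul_mass_le hw hw_lattice (isUpperSet_holdsWithout hA e) (isUpperSet_edgeOpen e)
  rw [← hA_split, ← hA_open_split]
  linear_combination hfkg + mass w (A ∩ {ω | Pivotal A e ω}) * huniv_split

theorem mass_comp_setEdge_false (f : Config E → ℝ) (e : {e : Sym2 V // e ∈ E}) :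
    mass (fun ω ↦ f (setEdge ω e false)) (edgeOpen e) = mass f (edgeOpen e)ᶜ := by
  rw [mass_eq_sum_filter, mass_eq_sum_filter]
  refine Finset.sum_nbij' (fun ω ↦ setEdge ω e false) (fun ω ↦ setEdge ω e true)
    (fun ω _ ↦ ?_) (fun ω _ ↦ ?_) (fun ω hω ↦ ?_) (fun ω hω ↦ ?_) fun _ _ ↦ rfl
  · refine Finset.mem_filter.2 ⟨Finset.mem_univ _, ?_⟩
    rw [Set.mem_compl_iff, mem_edgeOpen, setEdge_apply_self]
    exact Bool.false_ne_true
  · exact Finset.mem_filter.2 ⟨Finset.mem_univ _, setEdge_apply_self ω e true⟩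
  · exact setEdge_setEdge_eq_self (Finset.mem_filter.1 hω).2 _
  · exact setEdge_setEdge_eq_self
      (Bool.eq_false_of_not_eq_true (Finset.mem_filter.1 hω).2) _

theorem mass_edgeOpen_le [Finite V] {y : Sym2 V → ℝ} (hy : ∀ e ∈ E, 0 ≤ y e) {q : ℝ} (hq : 1 ≤ q)
    (e : {e : Sym2 V // e ∈ E}) :
    mass (weight E y q) (edgeOpen e) ≤ y e * mass (weight E y q) (edgeOpen e)ᶜ := by
  rw [← mass_comp_setEdge_false, mass_eq_sum_filter, mass_eq_sum_filter, Finset.mul_sum]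
  exact Finset.sum_le_sum fun ω hω ↦
    weight_le_mul_weight_setEdge_false hy hq (Finset.mem_filter.1 hω).2

theorem condMass_pivotal_le [Finite V] {y : Sym2 V → ℝ} (hy : ∀ e ∈ E, 0 < y e) {q : ℝ}
    (hq : 1 ≤ q) {A : Set (Config E)} (hA : IsUpperSet A) (hA_ne : A.Nonempty)
    (e : {e : Sym2 V // e ∈ E}) :
    condMass (weight E y q) {ω | Pivotal A e ω} A ≤
      (1 + y e) * (condMass (weight E y q) (edgeOpen e) A -
        condMass (weight E y q) (edgeOpen e) Set.univ) := by
  set w := weight E y q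
  have hw : ∀ ω, 0 < w ω := weight_pos hy (one_pos.trans_le hq)
  have hw_nonneg : ∀ ω, 0 ≤ w ω := fun ω ↦ (hw ω).le
  have hy_nonneg : ∀ e ∈ E, 0 ≤ y e := fun e he ↦ (hy e he).le
  have hA_pos : 0 < mass w A := mass_pos hw hA_ne
  have huniv_pos : 0 < mass w Set.univ := mass_pos hw (hA_ne.mono A.subset_univ)
  have huniv_le : mass w Set.univ ≤ (1 + y e) * mass w (edgeOpen e)ᶜ := by
    rw [← mass_add_mass_compl w (edgeOpen e)]
    linarith [mass_edgeOpen_le hy_nonneg hq e]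
  have hcov := mass_pivotal_mul_mass_closed_le hw_nonneg (weight_mul_weight_le hy_nonneg hq) hA e
  rw [condMass, condMass, condMass, Set.univ_inter, div_sub_div _ _ hA_pos.ne' huniv_pos.ne',
    mul_div_assoc', div_le_div_iff₀ hA_pos (mul_pos hA_pos huniv_pos)]
  calc mass w (A ∩ {ω | Pivotal A e ω}) * (mass w A * mass w Set.univ)
      ≤ mass w (A ∩ {ω | Pivotal A e ω}) * (mass w A * ((1 + y e) * mass w (edgeOpen e)ᶜ)) := by
        have := mass_nonneg hw_nonneg (A ∩ {ω | Pivotal A e ω})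
        gcongr
    _ = (1 + y e) * mass w A * (mass w (A ∩ {ω | Pivotal A e ω}) * mass w (edgeOpen e)ᶜ) := by
        ring
    _ ≤ (1 + y e) * mass w A *
        (mass w Set.univ * mass w (A ∩ edgeOpen e) - mass w A * mass w (edgeOpen e)) := by
        have := hy e e.2
        gcongr
    _ = (1 + y e) * (mass w (A ∩ edgeOpen e) * mass w Set.univ -
        mass w A * mass w (edgeOpen e)) * mass w A := by ring

end Pivotal

/-! ### The logarithmic derivative in the edge weight -/

section Derivative

variable {V : Type*} [DecidableEq V] {E : Finset (Sym2 V)}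

/-- The number of open edges of `ω` that belong to `E'`, the exponent of `s` in the weight of `ω`
when the edges of `E'` have weight `s`. -/
def openCount (E' : Finset (Sym2 V)) (ω : Config E) : ℕ :=
  Finset.card {e : {e : Sym2 V // e ∈ E} | e.1 ∈ E' ∧ ω ∈ edgeOpen e}

theorem modWeights_pos {E' : Finset (Sym2 V)} {x : Sym2 V → ℝ} (hx : ∀ e ∈ E, 0 < x e) {s : ℝ}
    (hs : 0 < s) : ∀ e ∈ E, 0 < modWeights E' x s e := fun e he ↦ by
  unfold modWeights
  split_ifs
  exacts [hs, hx e he]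

theorem weight_modWeights (E' : Finset (Sym2 V)) (x : Sym2 V → ℝ) (q t : ℝ) (ω : Config E) :
    weight E (modWeights E' x t) q ω =
      weight E (modWeights E' x 1) q ω * t ^ openCount E' ω := by
  rw [openCount, ← Finset.prod_const, Finset.prod_filter, weight, weight, mul_assoc,
    ← Finset.prod_mul_distrib]
  congr 1
  refine Finset.prod_congr rfl fun e _ ↦ ?_
  by_cases hω : ω e = true <;> by_cases he : e.1 ∈ E' <;> simp [modWeights, edgeOpen, hω, he]

theorem hasDerivAt_weight (E' : Finset (Sym2 V)) (x : Sym2 V → ℝ) (q : ℝ) (ω : Config E) {s : ℝ}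
    (hs : s ≠ 0) :
    HasDerivAt (fun t ↦ weight E (modWeights E' x t) q ω)
      (s⁻¹ * (openCount E' ω * weight E (modWeights E' x s) q ω)) s := by
  have h := (hasDerivAt_pow (openCount E' ω) s).const_mul (weight E (modWeights E' x 1) q ω)
  simp only [← weight_modWeights] at h
  refine h.congr_deriv ?_
  rw [weight_modWeights E' x q s]
  rcases openCount E' ω with _ | n
  · simp
  · simp only [Nat.add_sub_cancel, pow_succ]
    field_simp

theorem mass_openCount_mul (E' : Finset (Sym2 V)) (w : Config E → ℝ) (A : Set (Config E)) :
    mass (fun ω ↦ openCount E' ω * w ω) A =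
      ∑ e : {e : Sym2 V // e ∈ E} with e.1 ∈ E', mass w (A ∩ edgeOpen e) := by
  calc mass (fun ω ↦ openCount E' ω * w ω) A
      = ∑ ω with ω ∈ A, ∑ e : {e : Sym2 V // e ∈ E} with e.1 ∈ E',
          if ω ∈ edgeOpen e then w ω else 0 :=
        Finset.sum_congr rfl fun ω _ ↦ by
          rw [← Finset.sum_filter, Finset.filter_filter, Finset.sum_const, nsmul_eq_mul]
          rfl
    _ = ∑ e : {e : Sym2 V // e ∈ E} with e.1 ∈ E', ∑ ω with ω ∈ A,
          if ω ∈ edgeOpen e then w ω else 0 := Finset.sum_comm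
    _ = ∑ e : {e : Sym2 V // e ∈ E} with e.1 ∈ E', mass w (A ∩ edgeOpen e) :=
        Finset.sum_congr rfl fun e _ ↦ by
          rw [← Finset.sum_filter, Finset.filter_filter]
          exact (mass_eq_sum_filter w (A ∩ edgeOpen e)).symm

theorem hasDerivAt_log_mass_weight (E' : Finset (Sym2 V)) {x : Sym2 V → ℝ} (hx : ∀ e ∈ E, 0 < x e)
    {q : ℝ} (hq : 0 < q) {A : Set (Config E)} (hA : A.Nonempty) {s : ℝ} (hs : 0 < s) :
    HasDerivAt (fun t ↦ Real.log (mass (weight E (modWeights E' x t) q) A))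
      (s⁻¹ * ∑ e : {e : Sym2 V // e ∈ E} with e.1 ∈ E',
        condMass (weight E (modWeights E' x s) q) (edgeOpen e) A) s := by
  have hA_pos := mass_pos (weight_pos (modWeights_pos (E' := E') hx hs) hq) hA
  refine ((hasDerivAt_mass (fun ω ↦ hasDerivAt_weight E' x q ω hs.ne') A).log
    hA_pos.ne').congr_deriv ?_
  simp only [condMass]
  rw [← Finset.sum_div, ← mass_openCount_mul, mul_div_assoc', mass_const_mul]

theorem sum_prob_eq_condMass (y : Sym2 V → ℝ) (q : ℝ) (P : Config E → Prop) [DecidablePred P] :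
    ∑ ω, (if P ω then prob E y q ω else 0) = condMass (weight E y q) {ω | P ω} Set.univ := by
  rw [condMass, Set.univ_inter, mass_eq_sum_filter, mass_eq_sum_filter, Finset.sum_div,
    Finset.sum_filter]
  simp [prob, Z]

theorem condPiv_eq_condMass (E' : Finset (Sym2 V)) {x : Sym2 V → ℝ} (hx : ∀ e ∈ E, 0 < x e)
    {q : ℝ} (hq : 0 < q) {s : ℝ} (hs : 0 < s) (A : Set (Config E)) (e : {e : Sym2 V // e ∈ E}) :
    condPiv E E' x q s A e =
      condMass (weight E (modWeights E' x s) q) {ω | Pivotal A e ω} A := by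
  have hZ := mass_pos (weight_pos (modWeights_pos (E' := E') hx hs) hq) Set.univ_nonempty
  rw [condPiv, probOf, sum_prob_eq_condMass _ _ (fun ω ↦ ω ∈ A ∧ Pivotal A e ω),
    sum_prob_eq_condMass, condMass, condMass, div_div_div_cancel_right₀ hZ.ne', Set.univ_inter,
    Set.univ_inter]
  rfl

theorem hasDerivAt_log_probOf (E' : Finset (Sym2 V)) {x : Sym2 V → ℝ} (hx : ∀ e ∈ E, 0 < x e)
    {q : ℝ} (hq : 0 < q) {A : Set (Config E)} (hA : A.Nonempty) {s : ℝ} (hs : 0 < s) :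
    HasDerivAt (fun t ↦ Real.log (probOf E E' x q t A))
      (s⁻¹ * ∑ e : {e : Sym2 V // e ∈ E} with e.1 ∈ E',
        (condMass (weight E (modWeights E' x s) q) (edgeOpen e) A -
          condMass (weight E (modWeights E' x s) q) (edgeOpen e) Set.univ)) s := by
  rw [Finset.sum_sub_distrib, mul_sub]
  refine ((hasDerivAt_log_mass_weight E' hx hq hA hs).fun_sub
    (hasDerivAt_log_mass_weight E' hx hq Set.univ_nonempty hs)).congr_of_eventuallyEq ?_
  filter_upwards [eventually_gt_nhds hs] with t ht
  have hw := weight_pos (modWeights_pos (E' := E') hx ht) hq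
  rw [probOf, sum_prob_eq_condMass, condMass, Set.univ_inter, Set.ofPred_mem_eq]
  exact Real.log_div (mass_pos hw hA).ne' (mass_pos hw Set.univ_nonempty).ne'

end Derivative

end RandomCluster

open RandomCluster in
theorem stmt3 {V : Type*} [Fintype V] [DecidableEq V] (E E' : Finset (Sym2 V)) (hE' : E' ⊆ E)
    (x : Sym2 V → ℝ) (hx : ∀ e ∈ E, 0 < x e) (q : ℝ) (hq : 1 ≤ q)
    (A : Set (Config E)) (hA : A.Nonempty) (hAinc : Increasing A) :
    ∀ s : ℝ, 0 < s →
      DifferentiableAt ℝ (fun t => Real.log (probOf E E' x q t A)) s ∧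
      deriv (fun t => Real.log (probOf E E' x q t A)) s ≥
        (1 / (s * (1 + s))) *
          ∑ e : {e : Sym2 V // e ∈ E}, (if e.1 ∈ E' then condPiv E E' x q s A e else 0) := by
  intro s hs
  have hq_pos : 0 < q := one_pos.trans_le hq
  have hderiv := hasDerivAt_log_probOf E' hx hq_pos hA hs
  refine ⟨hderiv.differentiableAt, ?_⟩
  rw [hderiv.deriv, ge_iff_le, ← Finset.sum_filter, one_div, mul_inv, mul_assoc]
  gcongr
  rw [inv_mul_le_iff₀ (by positivity), Finset.mul_sum]
  refine Finset.sum_le_sum fun e he ↦ ?_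
  have hs_eq : modWeights E' x s e = s := if_pos (Finset.mem_filter.1 he).2
  rw [condPiv_eq_condMass E' hx hq_pos hs]
  simpa only [hs_eq] using condMass_pivotal_le (modWeights_pos (E' := E') hx hs) hq
    (increasing_iff_isUpperSet.1 hAinc) hA e
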